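/- arXiv:1405.7891 — 2 statements merged into one kernel-verified Lean document; each statement's English description precedes it below -/
import Mathlib

section
/- Let Q(x,y) = x⁴ + y⁴ − 6x²y² and G(x,y) = Q(x,y) · log(x² + y²), defined for (x,y) ∈ ℝ² \ {(0,0)}. Then there exist functions H₁, H₂, bounded on the punctured unit ball B₁ \ {0}, such that ∂⁴G/∂x⁴(x,y) = 24 log(x² + y²) + H₁(x,y) and ∂⁴G/∂y⁴(x,y) = 24 log(x² + y²) + H₂(x,y) for all 0 < x² + y² < 1. -/
/-!
Write `r = x² + y²`. Reducing modulo `r` via `x² = r - y²` keeps the successive `x`-derivatives of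
`G` short; off the origin they are

* `(4x³ - 12xy²) log r + 2x³ - 14xy² + 16xy⁴/r`,
* `(12x² - 12y²) log r + 14x² - 46y² + 16y⁴/r + 32y⁶/r²`,
* `24x log r + 52x - 48xy²/r - 32xy⁴/r² - 128xy⁶/r³`,
* `24 log r + 100 + 512u³ - 768u⁴`, where `u = y²/r`.

Since `0 ≤ u ≤ 1`, the remainder in the last line is bounded. The statement for `∂⁴G/∂y⁴` follows from
the symmetry `G x y = G y x`.
-/

/-- Partial derivative in the first variable. -/
noncomputable def pdx (f : ℝ → ℝ → ℝ) (x y : ℝ) : ℝ := deriv (fun t => f t y) x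

/-- Partial derivative in the second variable. -/
noncomputable def pdy (f : ℝ → ℝ → ℝ) (x y : ℝ) : ℝ := deriv (fun t => f x t) y

/-- The polynomial `Q(x,y) = x⁴ + y⁴ − 6 x² y²`. -/
def Q (x y : ℝ) : ℝ := x ^ 4 + y ^ 4 - 6 * x ^ 2 * y ^ 2

/-- `G(x,y) = Q(x,y) log(x² + y²)`. -/
noncomputable def G (x y : ℝ) : ℝ := Q x y * Real.log (x ^ 2 + y ^ 2)

/-- Off the origin `pdx f` may be computed from a formula `g` for `f` valid only off the origin,
because the punctured plane is open. -/
lemma pdx_eq_of_eq_off_origin {f g : ℝ → ℝ → ℝ}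
    (hfg : ∀ x y : ℝ, 0 < x ^ 2 + y ^ 2 → f x y = g x y) {x y d : ℝ}
    (hr : 0 < x ^ 2 + y ^ 2) (hd : HasDerivAt (fun t => g t y) d x) : pdx f x y = d := by
  have hopen : IsOpen {t : ℝ | 0 < t ^ 2 + y ^ 2} :=
    isOpen_lt continuous_const (by fun_prop)
  have hev : (fun t => f t y) =ᶠ[nhds x] fun t => g t y := by
    filter_upwards [hopen.mem_nhds hr] with t ht using hfg t y ht
  exact (hd.congr_of_eventuallyEq hev).deriv

lemma hasDerivAt_sq_add_sq (x y : ℝ) : HasDerivAt (fun t : ℝ => t ^ 2 + y ^ 2) (2 * x) x := by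
  simpa using (hasDerivAt_pow 2 x).add_const (y ^ 2)

lemma hasDerivAt_log_sq_add_sq {x y : ℝ} (hr : 0 < x ^ 2 + y ^ 2) :
    HasDerivAt (fun t : ℝ => Real.log (t ^ 2 + y ^ 2)) (2 * x / (x ^ 2 + y ^ 2)) x :=
  (hasDerivAt_sq_add_sq x y).log hr.ne'

lemma pdx_G {x y : ℝ} (hr : 0 < x ^ 2 + y ^ 2) :
    pdx G x y = (4 * x ^ 3 - 12 * x * y ^ 2) * Real.log (x ^ 2 + y ^ 2)
      + (2 * x ^ 3 - 14 * x * y ^ 2) + 16 * x * y ^ 4 / (x ^ 2 + y ^ 2) := by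
  refine pdx_eq_of_eq_off_origin (g := G) (fun _ _ _ => rfl) hr ?_
  have hpoly : HasDerivAt (fun t : ℝ => t ^ 4 + y ^ 4 - 6 * t ^ 2 * y ^ 2) _ x :=
    ((hasDerivAt_pow 4 x).add_const (y ^ 4)).sub
      (((hasDerivAt_pow 2 x).const_mul 6).mul_const (y ^ 2))
  refine (hpoly.mul (hasDerivAt_log_sq_add_sq hr)).congr_deriv ?_
  field_simp
  push_cast
  ring

lemma pdx_pdx_G {x y : ℝ} (hr : 0 < x ^ 2 + y ^ 2) :
    pdx (pdx G) x y = (12 * x ^ 2 - 12 * y ^ 2) * Real.log (x ^ 2 + y ^ 2)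
      + (14 * x ^ 2 - 46 * y ^ 2) + 16 * y ^ 4 / (x ^ 2 + y ^ 2)
      + 32 * y ^ 6 / (x ^ 2 + y ^ 2) ^ 2 := by
  refine pdx_eq_of_eq_off_origin (fun _ _ h => pdx_G h) hr ?_
  have hA : HasDerivAt (fun t : ℝ => 4 * t ^ 3 - 12 * t * y ^ 2) _ x :=
    ((hasDerivAt_pow 3 x).const_mul 4).sub (((hasDerivAt_id' x).const_mul 12).mul_const (y ^ 2))
  have hB : HasDerivAt (fun t : ℝ => 2 * t ^ 3 - 14 * t * y ^ 2) _ x :=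
    ((hasDerivAt_pow 3 x).const_mul 2).sub (((hasDerivAt_id' x).const_mul 14).mul_const (y ^ 2))
  have hC : HasDerivAt (fun t : ℝ => 16 * t * y ^ 4 / (t ^ 2 + y ^ 2)) _ x :=
    (((hasDerivAt_id' x).const_mul 16).mul_const (y ^ 4)).div (hasDerivAt_sq_add_sq x y) hr.ne'
  refine (((hA.mul (hasDerivAt_log_sq_add_sq hr)).add hB).add hC).congr_deriv ?_
  field_simp
  push_cast
  ring

lemma pdx_pdx_pdx_G {x y : ℝ} (hr : 0 < x ^ 2 + y ^ 2) :
    pdx (pdx (pdx G)) x y = 24 * x * Real.log (x ^ 2 + y ^ 2) + 52 * x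
      - 48 * x * y ^ 2 / (x ^ 2 + y ^ 2) - 32 * x * y ^ 4 / (x ^ 2 + y ^ 2) ^ 2
      - 128 * x * y ^ 6 / (x ^ 2 + y ^ 2) ^ 3 := by
  refine pdx_eq_of_eq_off_origin (fun _ _ h => pdx_pdx_G h) hr ?_
  have hS := hasDerivAt_sq_add_sq x y
  have hA : HasDerivAt (fun t : ℝ => 12 * t ^ 2 - 12 * y ^ 2) _ x :=
    ((hasDerivAt_pow 2 x).const_mul 12).sub_const (12 * y ^ 2)
  have hB : HasDerivAt (fun t : ℝ => 14 * t ^ 2 - 46 * y ^ 2) _ x :=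
    ((hasDerivAt_pow 2 x).const_mul 14).sub_const (46 * y ^ 2)
  have hC : HasDerivAt (fun t : ℝ => 16 * y ^ 4 / (t ^ 2 + y ^ 2)) _ x :=
    (hasDerivAt_const x (16 * y ^ 4)).div hS hr.ne'
  have hD : HasDerivAt (fun t : ℝ => 32 * y ^ 6 / (t ^ 2 + y ^ 2) ^ 2) _ x :=
    (hasDerivAt_const x (32 * y ^ 6)).div (hS.fun_pow 2) (pow_ne_zero 2 hr.ne')
  refine ((((hA.mul (hasDerivAt_log_sq_add_sq hr)).add hB).add hC).add hD).congr_deriv ?_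
  field_simp
  push_cast
  ring

lemma pdx_pdx_pdx_pdx_G {x y : ℝ} (hr : 0 < x ^ 2 + y ^ 2) :
    pdx (pdx (pdx (pdx G))) x y = 24 * Real.log (x ^ 2 + y ^ 2)
      + (100 + 512 * (y ^ 2 / (x ^ 2 + y ^ 2)) ^ 3 - 768 * (y ^ 2 / (x ^ 2 + y ^ 2)) ^ 4) := by
  refine pdx_eq_of_eq_off_origin (fun _ _ h => pdx_pdx_pdx_G h) hr ?_
  have hS := hasDerivAt_sq_add_sq x y
  have hlin (c : ℝ) : HasDerivAt (fun t : ℝ => c * t) _ x := (hasDerivAt_id' x).const_mul c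
  have hB : HasDerivAt (fun t : ℝ => 48 * t * y ^ 2 / (t ^ 2 + y ^ 2)) _ x :=
    ((hlin 48).mul_const (y ^ 2)).div hS hr.ne'
  have hC : HasDerivAt (fun t : ℝ => 32 * t * y ^ 4 / (t ^ 2 + y ^ 2) ^ 2) _ x :=
    ((hlin 32).mul_const (y ^ 4)).div (hS.fun_pow 2) (pow_ne_zero 2 hr.ne')
  have hD : HasDerivAt (fun t : ℝ => 128 * t * y ^ 6 / (t ^ 2 + y ^ 2) ^ 3) _ x :=
    ((hlin 128).mul_const (y ^ 6)).div (hS.fun_pow 3) (pow_ne_zero 3 hr.ne')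
  refine (((((hlin 24).mul (hasDerivAt_log_sq_add_sq hr)).add (hlin 52)).sub hB).sub hC).sub hD
    |>.congr_deriv ?_
  field_simp
  push_cast
  ring

lemma abs_remainder_le {x y : ℝ} (hr : 0 < x ^ 2 + y ^ 2) :
    |100 + 512 * (y ^ 2 / (x ^ 2 + y ^ 2)) ^ 3 - 768 * (y ^ 2 / (x ^ 2 + y ^ 2)) ^ 4| ≤ 1000 := by
  have h0 : 0 ≤ y ^ 2 / (x ^ 2 + y ^ 2) := by positivity
  have h1 : y ^ 2 / (x ^ 2 + y ^ 2) ≤ 1 := by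
    rw [div_le_one hr]
    nlinarith [sq_nonneg x]
  generalize y ^ 2 / (x ^ 2 + y ^ 2) = u at h0 h1
  have h3 : u ^ 3 ≤ 1 := pow_le_one₀ h0 h1
  have h4 : u ^ 4 ≤ 1 := pow_le_one₀ h0 h1
  have h3' : 0 ≤ u ^ 3 := pow_nonneg h0 3
  have h4' : 0 ≤ u ^ 4 := pow_nonneg h0 4
  rw [abs_le]
  constructor <;> linarith

lemma G_comm (x y : ℝ) : G x y = G y x := by
  unfold G Q
  rw [add_comm (x ^ 2)]
  ring

lemma pdy_eq_pdx_swap {f g : ℝ → ℝ → ℝ} (h : ∀ x y, f x y = g y x) (x y : ℝ) :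
    pdy f x y = pdx g y x := by
  simp only [pdx, pdy, h]

/-- On the punctured unit ball, `∂⁴G/∂x⁴ = 24 log(x² + y²) + H₁` and
`∂⁴G/∂y⁴ = 24 log(x² + y²) + H₂` with `H₁, H₂` bounded there. -/
theorem pure_fourth_derivatives_G_log_singularity :
    ∃ H₁ H₂ : ℝ → ℝ → ℝ,
      (∃ M : ℝ, ∀ x y : ℝ, 0 < x ^ 2 + y ^ 2 → x ^ 2 + y ^ 2 < 1 → |H₁ x y| ≤ M) ∧
      (∃ M : ℝ, ∀ x y : ℝ, 0 < x ^ 2 + y ^ 2 → x ^ 2 + y ^ 2 < 1 → |H₂ x y| ≤ M) ∧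
      (∀ x y : ℝ, 0 < x ^ 2 + y ^ 2 → x ^ 2 + y ^ 2 < 1 →
        pdx (pdx (pdx (pdx G))) x y = 24 * Real.log (x ^ 2 + y ^ 2) + H₁ x y) ∧
      (∀ x y : ℝ, 0 < x ^ 2 + y ^ 2 → x ^ 2 + y ^ 2 < 1 →
        pdy (pdy (pdy (pdy G))) x y = 24 * Real.log (x ^ 2 + y ^ 2) + H₂ x y) := by
  refine ⟨fun x y => 100 + 512 * (y ^ 2 / (x ^ 2 + y ^ 2)) ^ 3
      - 768 * (y ^ 2 / (x ^ 2 + y ^ 2)) ^ 4,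
    fun x y => 100 + 512 * (x ^ 2 / (y ^ 2 + x ^ 2)) ^ 3 - 768 * (x ^ 2 / (y ^ 2 + x ^ 2)) ^ 4,
    ⟨1000, fun x y hr _ => abs_remainder_le hr⟩,
    ⟨1000, fun x y hr _ => abs_remainder_le (by rwa [add_comm])⟩,
    fun x y hr _ => pdx_pdx_pdx_pdx_G hr, fun x y hr _ => ?_⟩
  rw [add_comm] at hr
  rw [add_comm (x ^ 2) (y ^ 2),
    pdy_eq_pdx_swap (pdy_eq_pdx_swap (pdy_eq_pdx_swap (pdy_eq_pdx_swap G_comm))),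
    pdx_pdx_pdx_pdx_G hr]
end

section
/- Let Q(x,y) = x⁴ + y⁴ − 6x²y² and G(x,y) = Q(x,y) · log(x² + y²), defined for (x,y) ∈ ℝ² \ {(0,0)}. Then there exists r ∈ (0,1) such that |∂⁴G/∂x²∂y²(x,y)| ≥ 12 |log(x² + y²)| for all (x,y) with 0 < x² + y² < r². In particular ∂⁴G/∂x²∂y² is unbounded on every punctured neighborhood of the origin. -/
/-- The shape `A log s + B / sᵏ`, with `s = t² + c`, is preserved by differentiation. -/
lemma hasDerivAt_log_add_div {A B : ℝ → ℝ} {A' B' c t : ℝ} (k : ℕ)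
    (hA : HasDerivAt A A' t) (hB : HasDerivAt B B' t) (hs : 0 < t ^ 2 + c) :
    HasDerivAt (fun u => A u * Real.log (u ^ 2 + c) + B u / (u ^ 2 + c) ^ k)
      (A' * Real.log (t ^ 2 + c)
        + (B' * (t ^ 2 + c) - 2 * k * t * B t + 2 * t * A t * (t ^ 2 + c) ^ k)
          / (t ^ 2 + c) ^ (k + 1)) t := by
  have h1 : HasDerivAt (fun u : ℝ => u ^ 2 + c) (2 * t) t := by
    simpa using (hasDerivAt_pow 2 t).add_const c
  have h2 := (hA.mul (h1.log hs.ne')).add (hB.div (h1.pow k) (pow_ne_zero k hs.ne'))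
  refine h2.congr_deriv ?_
  have hs' := hs.ne'
  rcases k with _ | k
  · simp; field_simp; ring
  · simp only [Nat.add_sub_cancel, Pi.pow_apply]
    push_cast
    field_simp
    ring

lemma pdy_eq_of {f g : ℝ → ℝ → ℝ} (h : ∀ x y : ℝ, 0 < x ^ 2 + y ^ 2 → f x y = g x y)
    {x y d : ℝ} (hs : 0 < x ^ 2 + y ^ 2) (hg : HasDerivAt (fun t => g x t) d y) :
    pdy f x y = d := by
  have hev : ∀ᶠ t in nhds y, 0 < x ^ 2 + t ^ 2 :=
    (by fun_prop : Continuous fun t : ℝ => x ^ 2 + t ^ 2).continuousAt.eventually_const_lt hs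
  exact (hg.congr_of_eventuallyEq (hev.mono fun t ht => h x t ht)).deriv

lemma pdx_eq_of {f g : ℝ → ℝ → ℝ} (h : ∀ x y : ℝ, 0 < x ^ 2 + y ^ 2 → f x y = g x y)
    {x y d : ℝ} (hs : 0 < x ^ 2 + y ^ 2) (hg : HasDerivAt (fun t => g t y) d x) :
    pdx f x y = d := by
  have hev : ∀ᶠ t in nhds x, 0 < t ^ 2 + y ^ 2 :=
    (by fun_prop : Continuous fun t : ℝ => t ^ 2 + y ^ 2).continuousAt.eventually_const_lt hs
  exact (hg.congr_of_eventuallyEq (hev.mono fun t ht => h t y ht)).deriv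

/-- Derivative of a polynomial of degree at most 7, the largest degree of a coefficient needed. -/
lemma hasDerivAt_poly (a₀ a₁ a₂ a₃ a₄ a₅ a₆ a₇ t : ℝ) :
    HasDerivAt (fun u : ℝ => a₀ + a₁ * u + a₂ * u ^ 2 + a₃ * u ^ 3 + a₄ * u ^ 4 + a₅ * u ^ 5
        + a₆ * u ^ 6 + a₇ * u ^ 7)
      (a₁ + 2 * a₂ * t + 3 * a₃ * t ^ 2 + 4 * a₄ * t ^ 3 + 5 * a₅ * t ^ 4 + 6 * a₆ * t ^ 5
        + 7 * a₇ * t ^ 6) t := by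
  have h := (((((((hasDerivAt_const t a₀).add ((hasDerivAt_id t).const_mul a₁)).add
    ((hasDerivAt_pow 2 t).const_mul a₂)).add ((hasDerivAt_pow 3 t).const_mul a₃)).add
    ((hasDerivAt_pow 4 t).const_mul a₄)).add ((hasDerivAt_pow 5 t).const_mul a₅)).add
    ((hasDerivAt_pow 6 t).const_mul a₆)).add ((hasDerivAt_pow 7 t).const_mul a₇)
  refine h.congr_deriv ?_
  norm_num
  ring

lemma pdy_G {x y : ℝ} (hs : 0 < x ^ 2 + y ^ 2) :
    pdy G x y = (4 * y ^ 3 - 12 * x ^ 2 * y) * Real.log (x ^ 2 + y ^ 2)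
      + (2 * y ^ 5 - 12 * x ^ 2 * y ^ 3 + 2 * x ^ 4 * y) / (x ^ 2 + y ^ 2) ^ 1 := by
  have hs' : 0 < y ^ 2 + x ^ 2 := by linarith
  refine pdy_eq_of (fun _ _ _ => rfl) hs ?_
  have h := hasDerivAt_log_add_div 0
    (hasDerivAt_poly (x ^ 4) 0 (-6 * x ^ 2) 0 1 0 0 0 y) (hasDerivAt_const y (0 : ℝ)) hs'
  convert h using 1
  · funext t; simp only [G, Q]; rw [add_comm (t ^ 2)]; ring
  · rw [add_comm (y ^ 2)]; congr 2 <;> push_cast <;> ring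

lemma pdy_pdy_G {x y : ℝ} (hs : 0 < x ^ 2 + y ^ 2) :
    pdy (pdy G) x y = (12 * y ^ 2 - 12 * x ^ 2) * Real.log (x ^ 2 + y ^ 2)
      + (14 * y ^ 6 - 18 * x ^ 2 * y ^ 4 - 62 * x ^ 4 * y ^ 2 + 2 * x ^ 6)
        / (x ^ 2 + y ^ 2) ^ 2 := by
  have hs' : 0 < y ^ 2 + x ^ 2 := by linarith
  refine pdy_eq_of (fun _ _ h => pdy_G h) hs ?_
  have h := hasDerivAt_log_add_div 1
    (hasDerivAt_poly 0 (-12 * x ^ 2) 0 4 0 0 0 0 y)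
    (hasDerivAt_poly 0 (2 * x ^ 4) 0 (-12 * x ^ 2) 0 2 0 0 y) hs'
  convert h using 1
  · funext t; rw [add_comm (t ^ 2)]; congr 2 <;> ring
  · rw [add_comm (y ^ 2)]; congr 2 <;> push_cast <;> ring

lemma pdx_pdy_pdy_G {x y : ℝ} (hs : 0 < x ^ 2 + y ^ 2) :
    pdx (pdy (pdy G)) x y = (-24 * x) * Real.log (x ^ 2 + y ^ 2)
      + (-68 * x * y ^ 6 - 188 * x ^ 3 * y ^ 4 - 12 * x ^ 5 * y ^ 2 - 20 * x ^ 7)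
        / (x ^ 2 + y ^ 2) ^ 3 := by
  refine pdx_eq_of (fun _ _ h => pdy_pdy_G h) hs ?_
  have h := hasDerivAt_log_add_div 2
    (hasDerivAt_poly (12 * y ^ 2) 0 (-12) 0 0 0 0 0 x)
    (hasDerivAt_poly (14 * y ^ 6) 0 (-18 * y ^ 4) 0 (-62 * y ^ 2) 0 2 0 x) hs
  convert h using 1
  · funext t; congr 2 <;> ring
  · congr 2 <;> push_cast <;> ring

lemma pdx_pdx_pdy_pdy_G {x y : ℝ} (hs : 0 < x ^ 2 + y ^ 2) :
    pdx (pdx (pdy (pdy G))) x y = -24 * Real.log (x ^ 2 + y ^ 2)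
      + (-68 * (x ^ 2 + y ^ 2) ^ 4 + 768 * x ^ 4 * y ^ 4) / (x ^ 2 + y ^ 2) ^ 4 := by
  refine pdx_eq_of (fun _ _ h => pdx_pdy_pdy_G h) hs ?_
  have h := hasDerivAt_log_add_div 3
    (hasDerivAt_poly 0 (-24) 0 0 0 0 0 0 x)
    (hasDerivAt_poly 0 (-68 * y ^ 6) 0 (-188 * y ^ 4) 0 (-12 * y ^ 2) 0 (-20) x) hs
  convert h using 1
  · funext t; congr 2 <;> ring
  · congr 2 <;> push_cast <;> ring

/-- Near the origin, `|∂ₓ∂ₓ∂_y∂_y G(x,y)| ≥ 12 |log(x² + y²)|`; in particular this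
fourth derivative is unbounded on every punctured neighborhood of the origin. -/
theorem mixed_fourth_derivative_G_lower_bound :
    ∃ r : ℝ, 0 < r ∧ r < 1 ∧
      ∀ x y : ℝ, 0 < x ^ 2 + y ^ 2 → x ^ 2 + y ^ 2 < r ^ 2 →
        12 * |Real.log (x ^ 2 + y ^ 2)| ≤ |pdx (pdx (pdy (pdy G))) x y| := by
  refine ⟨Real.exp (-3), Real.exp_pos _, by simp, fun x y hs hr => ?_⟩
  have hlog : Real.log (x ^ 2 + y ^ 2) < -6 := by
    rw [Real.log_lt_iff_lt_exp hs]
    refine hr.trans_eq ?_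
    rw [← Real.exp_nat_mul]
    norm_num
  have hR : -68 ≤ (-68 * (x ^ 2 + y ^ 2) ^ 4 + 768 * x ^ 4 * y ^ 4) / (x ^ 2 + y ^ 2) ^ 4 := by
    rw [le_div_iff₀ (by positivity)]
    have : 0 ≤ 768 * x ^ 4 * y ^ 4 := by positivity
    linarith
  rw [pdx_pdx_pdy_pdy_G hs, abs_of_neg (by linarith)]
  refine le_trans ?_ (le_abs_self _)
  linarith
end
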